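/- Let Φ, B ∈ M(ℂ^n) be density matrices, S ∈ M(ℂ^n) any matrix, and τ ≥ 0, δ ≥ 0, r ≥ 1. Assume ‖B − Φ‖_∞ ≤ 2τ and ‖S − Φ‖₂ ≤ ‖B − Φ‖₂, and assume that Φ or B is δ-almost rank r. Then ‖S − Φ‖₂² ≤ 2r (δ + 2τ)². -/

import Mathlib

noncomputable section
open Matrix Kronecker BigOperators
open scoped ComplexOrder

/-- The Frobenius (Hilbert–Schmidt) norm `‖A‖₂ = √Tr(AᴴA)` of a complex matrix. -/
def frobNorm {n : Type*} [Fintype n] (A : Matrix n n ℂ) : ℝ :=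
  Real.sqrt (Matrix.trace (Aᴴ * A)).re

/-- The operator norm `‖A‖_∞` (largest singular value) of a complex matrix. -/
def opNorm {n : Type*} [Fintype n] [DecidableEq n] (A : Matrix n n ℂ) : ℝ :=
  ‖Matrix.toEuclideanCLM (𝕜 := ℂ) A‖

/-- The positive semidefinite square root of a positive semidefinite matrix (Mathlib's former
`Matrix.PosSemidef.sqrt`, with its old definition). -/
def Matrix.PosSemidef.sqrt {n 𝕜 : Type*} [Fintype n] [RCLike 𝕜] [DecidableEq n]
    {A : Matrix n n 𝕜} (hA : A.PosSemidef) : Matrix n n 𝕜 :=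
  hA.1.eigenvectorUnitary.1 * diagonal ((↑) ∘ Real.sqrt ∘ hA.1.eigenvalues) *
  (star hA.1.eigenvectorUnitary : Matrix n n 𝕜)

/-- The trace norm `‖A‖₁ = Tr √(AᴴA)` of a complex matrix. -/
def traceNorm {n : Type*} [Fintype n] [DecidableEq n] (A : Matrix n n ℂ) : ℝ :=
  ((Matrix.posSemidef_conjTranspose_mul_self A).sqrt).trace.re

/-- A density matrix: positive semidefinite with trace one. -/
def IsDensity {n : Type*} [Fintype n] (ρ : Matrix n n ℂ) : Prop :=
  ρ.PosSemidef ∧ ρ.trace = 1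

/-- A density matrix `ρ` is `δ`-almost rank `r` if there is a density matrix of rank at most `r`
within operator-norm distance `δ` of it. -/
def AlmostRank {n : Type*} [Fintype n] [DecidableEq n] (r : ℕ) (δ : ℝ) (ρ : Matrix n n ℂ) : Prop :=
  ∃ σ : Matrix n n ℂ, IsDensity σ ∧ σ.rank ≤ r ∧ opNorm (ρ - σ) ≤ δ

/-- The rank-one (outer-product) matrix `|v⟩⟨v|`. -/
def outer {n : Type*} (v : EuclideanSpace ℂ n) : Matrix n n ℂ :=
  Matrix.of fun i j => v i * (starRingEnd ℂ) (v j)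

/-- Partial trace over the first tensor factor. -/
def ptrace1 {d : ℕ} (X : Matrix (Fin d × Fin d) (Fin d × Fin d) ℂ) : Matrix (Fin d) (Fin d) ℂ :=
  Matrix.of fun j j' => ∑ i, X (i, j) (i, j')

/-- Partial trace over the second tensor factor. -/
def ptrace2 {d : ℕ} (X : Matrix (Fin d × Fin d) (Fin d × Fin d) ℂ) : Matrix (Fin d) (Fin d) ℂ :=
  Matrix.of fun i i' => ∑ j, X (i, j) (i', j)

/-- A family of `m` rank-one projectors, each given by a unit vector. -/
def IsRankOneProjFamily {d m : ℕ} (P : Fin m → Matrix (Fin d) (Fin d) ℂ) : Prop :=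
  ∀ l, ∃ v : EuclideanSpace ℂ (Fin d), ‖v‖ = 1 ∧ P l = outer v

/-- Near-isotropy: `∑ l, Tr(P l · A) • P l = A + Tr(A) • 𝟙` for every `A`. -/
def NearIsotropic {d m : ℕ} (P : Fin m → Matrix (Fin d) (Fin d) ℂ) : Prop :=
  ∀ A : Matrix (Fin d) (Fin d) ℂ,
    ∑ l, Matrix.trace (P l * A) • P l = A + Matrix.trace A • (1 : Matrix (Fin d) (Fin d) ℂ)

/-!
Write `D = B - Φ` and let `σ` be a density matrix of rank at most `r` near `Φ` or `B`. For a
density matrix `ρ`, the traceless matrix `ρ - σ` is positive semidefinite minus a matrix of rank at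
most `r`, so it has at most `r` negative eigenvalues; as the eigenvalues sum to zero, the negative
ones carry half of the trace norm, whence `‖ρ - σ‖₁ ≤ 2r ‖ρ - σ‖_∞`. Expanding
`‖D‖₂² = Tr D(B - σ) - Tr D(Φ - σ)` and using the duality between the trace norm and the operator
norm gives `‖D‖₂² ≤ 2r ‖D‖_∞ (‖B - σ‖_∞ + ‖Φ - σ‖_∞) ≤ 2r · 2τ · (2δ + 2τ)`.
-/

section RealSum

open scoped Finset

variable {ι : Type*} {s : Finset ι} {x : ι → ℝ} {c : ℝ}

lemma sum_abs_le_two_mul_card_neg_mul (hsum : ∑ i ∈ s, x i = 0) (hc : ∀ i ∈ s, -c ≤ x i) :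
    ∑ i ∈ s, |x i| ≤ 2 * #{i ∈ s | x i < 0} * c := by
  calc ∑ i ∈ s, |x i| = ∑ i ∈ s, (|x i| - x i) := by
        rw [Finset.sum_sub_distrib, hsum, sub_zero]
    _ = ∑ i ∈ s with x i < 0, 2 * -x i := by
        rw [Finset.sum_filter]
        refine Finset.sum_congr rfl fun i _ => ?_
        split_ifs with h
        · rw [abs_of_neg h]; ring
        · rw [abs_of_nonneg (not_lt.1 h), sub_self]
    _ ≤ ∑ i ∈ s with x i < 0, 2 * c :=
        Finset.sum_le_sum fun i hi => by linarith [hc i (Finset.mem_filter.1 hi).1]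
    _ = 2 * #{i ∈ s | x i < 0} * c := by
        rw [Finset.sum_const, nsmul_eq_mul]; ring

end RealSum

section UnitaryConjugation

variable {R 𝕜 ι : Type*} [CommRing R] [StarRing R] [RCLike 𝕜] [Fintype ι] [DecidableEq ι]

open Unitary

lemma trace_conjStarAlgAut (U : unitaryGroup ι R) (A : Matrix ι ι R) :
    (conjStarAlgAut R _ U A).trace = A.trace := by
  rw [conjStarAlgAut_apply, trace_mul_cycle, coe_star_mul_self, Matrix.one_mul]

lemma rank_conjStarAlgAut_le [Nontrivial R] (U : unitaryGroup ι R) (A : Matrix ι ι R) :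
    (conjStarAlgAut R _ U A).rank ≤ A.rank :=
  (rank_mul_le_left _ _).trans (rank_mul_le_right _ _)

lemma posSemidef_conjStarAlgAut [PartialOrder R] (U : unitaryGroup ι R)
    {A : Matrix ι ι R} (hA : A.PosSemidef) : (conjStarAlgAut R _ U A).PosSemidef :=
  hA.mul_mul_conjTranspose_same _

open scoped Matrix.Norms.L2Operator in
lemma l2_opNorm_conjStarAlgAut (U : unitaryGroup ι 𝕜) (A : Matrix ι ι 𝕜) :
    ‖conjStarAlgAut 𝕜 _ U A‖ = ‖A‖ := by
  rw [conjStarAlgAut_apply, ← coe_star, CStarRing.norm_mul_coe_unitary,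
    CStarRing.norm_coe_unitary_mul]

end UnitaryConjugation

section NegativeEigenvalues

open scoped Finset

variable {𝕜 ι : Type*} [RCLike 𝕜] [Fintype ι] [DecidableEq ι]

lemma card_neg_le_rank_posSemidef_sub_diagonal {P : Matrix ι ι 𝕜} (hP : P.PosSemidef)
    (x : ι → ℝ) :
    #{i | x i < 0} ≤ (P - diagonal (RCLike.ofReal ∘ x)).rank := by
  let neg : {i // x i < 0} → ι := Subtype.val
  have hneg : ((P - diagonal (RCLike.ofReal ∘ x)).submatrix neg neg).PosDef := by
    rw [sub_eq_add_neg, add_comm, diagonal_neg, submatrix_add, Pi.add_apply, Pi.add_apply,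
      submatrix_diagonal _ _ Subtype.val_injective]
    refine PosDef.add_posSemidef (posDef_diagonal_iff.2 fun i => ?_) (hP.submatrix neg)
    simpa using i.2
  rw [← Fintype.card_subtype, ← rank_of_isUnit _ hneg.isUnit]
  exact rank_submatrix_le _ _ _

lemma card_neg_eigenvalues_sub_le_rank {P Q : Matrix ι ι 𝕜} (hP : P.PosSemidef)
    (hPQ : (P - Q).IsHermitian) :
    #{i | hPQ.eigenvalues i < 0} ≤ Q.rank := by
  let φ := Unitary.conjStarAlgAut 𝕜 (Matrix ι ι 𝕜) (star hPQ.eigenvectorUnitary)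
  have hQ : φ P - diagonal (RCLike.ofReal ∘ hPQ.eigenvalues) = φ Q := by
    rw [← hPQ.conjStarAlgAut_star_eigenvectorUnitary, ← map_sub, sub_sub_cancel]
  calc #{i | hPQ.eigenvalues i < 0} ≤ (φ Q).rank :=
        hQ ▸ card_neg_le_rank_posSemidef_sub_diagonal (posSemidef_conjStarAlgAut _ hP) _
    _ ≤ Q.rank := rank_conjStarAlgAut_le _ _

end NegativeEigenvalues

section TraceNorm

variable {𝕜 ι : Type*} [RCLike 𝕜] [Fintype ι] [DecidableEq ι]

open scoped Finset Matrix.Norms.L2Operator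

lemma norm_apply_le_l2_opNorm {κ : Type*} [Fintype κ] (A : Matrix κ ι 𝕜) (i : κ) (j : ι) :
    ‖A i j‖ ≤ ‖A‖ := by
  calc ‖A i j‖ = ‖(WithLp.toLp 2 (A.col j) : EuclideanSpace 𝕜 κ) i‖ := rfl
    _ ≤ ‖(WithLp.toLp 2 (A.col j) : EuclideanSpace 𝕜 κ)‖ := PiLp.norm_apply_le _ i
    _ ≤ ‖A‖ := by simpa using l2_opNorm_mulVec A (EuclideanSpace.single j 1)

lemma abs_eigenvalues_le_l2_opNorm {A : Matrix ι ι 𝕜} (hA : A.IsHermitian) (i : ι) :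
    |hA.eigenvalues i| ≤ ‖A‖ := by
  have h := norm_apply_le_l2_opNorm
    (Unitary.conjStarAlgAut 𝕜 _ (star hA.eigenvectorUnitary) A) i i
  rwa [l2_opNorm_conjStarAlgAut, hA.conjStarAlgAut_star_eigenvectorUnitary, diagonal_apply_eq,
    Function.comp_apply, RCLike.norm_ofReal] at h

/-- The sum on the right is the trace norm of `A`. -/
lemma norm_trace_mul_le_l2_opNorm_mul_sum_abs_eigenvalues (D : Matrix ι ι 𝕜)
    {A : Matrix ι ι 𝕜} (hA : A.IsHermitian) :
    ‖(D * A).trace‖ ≤ ‖D‖ * ∑ i, |hA.eigenvalues i| := by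
  let φ := Unitary.conjStarAlgAut 𝕜 (Matrix ι ι 𝕜) (star hA.eigenvectorUnitary)
  have htrace : (D * A).trace = ∑ i, φ D i i * (hA.eigenvalues i : 𝕜) := by
    rw [← trace_conjStarAlgAut (star hA.eigenvectorUnitary), map_mul,
      hA.conjStarAlgAut_star_eigenvectorUnitary]
    simp only [trace, diag_apply, mul_diagonal, Function.comp_apply, φ]
  calc ‖(D * A).trace‖ ≤ ∑ i, ‖φ D i i‖ * |hA.eigenvalues i| := by
        rw [htrace]
        refine (norm_sum_le _ _).trans_eq ?_
        simp only [norm_mul, RCLike.norm_ofReal]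
    _ ≤ ∑ i, ‖D‖ * |hA.eigenvalues i| := by
        gcongr with i
        exact (norm_apply_le_l2_opNorm _ i i).trans_eq (l2_opNorm_conjStarAlgAut _ D)
    _ = ‖D‖ * ∑ i, |hA.eigenvalues i| := (Finset.mul_sum ..).symm

lemma sum_abs_eigenvalues_sub_le {P Q : Matrix ι ι 𝕜} (hP : P.PosSemidef)
    (hPQ : (P - Q).IsHermitian) (htrace : P.trace = Q.trace) :
    ∑ i, |hPQ.eigenvalues i| ≤ 2 * Q.rank * ‖P - Q‖ := by
  have hsum : ∑ i, hPQ.eigenvalues i = 0 := by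
    have h := hPQ.trace_eq_sum_eigenvalues
    rw [trace_sub, htrace, sub_self] at h
    exact_mod_cast h.symm
  calc ∑ i, |hPQ.eigenvalues i|
      ≤ 2 * #{i | hPQ.eigenvalues i < 0} * ‖P - Q‖ :=
        sum_abs_le_two_mul_card_neg_mul hsum fun i _ =>
          neg_le_of_abs_le (abs_eigenvalues_le_l2_opNorm hPQ i)
    _ ≤ 2 * Q.rank * ‖P - Q‖ := by
        gcongr
        exact card_neg_eigenvalues_sub_le_rank hP hPQ

lemma norm_trace_mul_sub_le (D : Matrix ι ι 𝕜) {P Q : Matrix ι ι 𝕜} (hP : P.PosSemidef)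
    (hQ : Q.IsHermitian) (htrace : P.trace = Q.trace) :
    ‖(D * (P - Q)).trace‖ ≤ 2 * Q.rank * ‖D‖ * ‖P - Q‖ := by
  have hPQ : (P - Q).IsHermitian := hP.1.sub hQ
  calc ‖(D * (P - Q)).trace‖ ≤ ‖D‖ * ∑ i, |hPQ.eigenvalues i| :=
        norm_trace_mul_le_l2_opNorm_mul_sum_abs_eigenvalues D hPQ
    _ ≤ ‖D‖ * (2 * Q.rank * ‖P - Q‖) := by
        gcongr
        exact sum_abs_eigenvalues_sub_le hP hPQ htrace
    _ = 2 * Q.rank * ‖D‖ * ‖P - Q‖ := by ring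

lemma norm_trace_mul_sub_le_of_posSemidef (D : Matrix ι ι 𝕜) {P₁ P₂ Q : Matrix ι ι 𝕜}
    (hP₁ : P₁.PosSemidef) (hP₂ : P₂.PosSemidef) (hQ : Q.IsHermitian)
    (htrace₁ : P₁.trace = Q.trace) (htrace₂ : P₂.trace = Q.trace) :
    ‖(D * (P₁ - P₂)).trace‖ ≤ 2 * Q.rank * ‖D‖ * (‖P₁ - Q‖ + ‖P₂ - Q‖) := by
  calc ‖(D * (P₁ - P₂)).trace‖ = ‖(D * (P₁ - Q)).trace - (D * (P₂ - Q)).trace‖ := by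
        rw [← trace_sub, ← Matrix.mul_sub, sub_sub_sub_cancel_right]
    _ ≤ ‖(D * (P₁ - Q)).trace‖ + ‖(D * (P₂ - Q)).trace‖ := norm_sub_le _ _
    _ ≤ 2 * Q.rank * ‖D‖ * ‖P₁ - Q‖ + 2 * Q.rank * ‖D‖ * ‖P₂ - Q‖ :=
        add_le_add (norm_trace_mul_sub_le D hP₁ hQ htrace₁)
          (norm_trace_mul_sub_le D hP₂ hQ htrace₂)
    _ = 2 * Q.rank * ‖D‖ * (‖P₁ - Q‖ + ‖P₂ - Q‖) := by ring

end TraceNorm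

section DensityMatrices

variable {ι : Type*} [Fintype ι]

lemma frobNorm_nonneg (A : Matrix ι ι ℂ) : 0 ≤ frobNorm A :=
  Real.sqrt_nonneg _

lemma frobNorm_sq (A : Matrix ι ι ℂ) : frobNorm A ^ 2 = (Aᴴ * A).trace.re :=
  Real.sq_sqrt (Complex.nonneg_iff.1 (posSemidef_conjTranspose_mul_self A).trace_nonneg).1

variable [DecidableEq ι]

lemma opNorm_nonneg (A : Matrix ι ι ℂ) : 0 ≤ opNorm A :=
  norm_nonneg _

open scoped Matrix.Norms.L2Operator in
lemma opNorm_sub_le_opNorm_sub_add_opNorm_sub (A B C : Matrix ι ι ℂ) :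
    opNorm (A - C) ≤ opNorm (A - B) + opNorm (B - C) :=
  norm_sub_le_norm_sub_add_norm_sub A B C

open scoped Matrix.Norms.L2Operator in
lemma opNorm_sub_rev (A B : Matrix ι ι ℂ) : opNorm (A - B) = opNorm (B - A) :=
  norm_sub_rev A B

lemma frobNorm_sub_sq_le {ρ₁ ρ₂ σ : Matrix ι ι ℂ} (hρ₁ : IsDensity ρ₁) (hρ₂ : IsDensity ρ₂)
    (hσ : IsDensity σ) :
    frobNorm (ρ₁ - ρ₂) ^ 2
      ≤ 2 * σ.rank * opNorm (ρ₁ - ρ₂) * (opNorm (ρ₁ - σ) + opNorm (ρ₂ - σ)) := by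
  have hsub : (ρ₁ - ρ₂).IsHermitian := hρ₁.1.1.sub hρ₂.1.1
  rw [frobNorm_sq, hsub.eq]
  exact (Complex.re_le_norm _).trans <|
    norm_trace_mul_sub_le_of_posSemidef (ρ₁ - ρ₂) hρ₁.1 hρ₂.1 hσ.1.1
      (hρ₁.2.trans hσ.2.symm) (hρ₂.2.trans hσ.2.symm)

lemma exists_isDensity_opNorm_sub_add_le {ρ₁ ρ₂ : Matrix ι ι ℂ} {r : ℕ} {δ : ℝ}
    (h : AlmostRank r δ ρ₁ ∨ AlmostRank r δ ρ₂) :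
    ∃ σ, IsDensity σ ∧ σ.rank ≤ r ∧
      opNorm (ρ₁ - σ) + opNorm (ρ₂ - σ) ≤ 2 * δ + opNorm (ρ₁ - ρ₂) := by
  rcases h with ⟨σ, hσ, hrank, hδ⟩ | ⟨σ, hσ, hrank, hδ⟩ <;> refine ⟨σ, hσ, hrank, ?_⟩
  · linarith [opNorm_sub_le_opNorm_sub_add_opNorm_sub ρ₂ ρ₁ σ, opNorm_sub_rev ρ₁ ρ₂]
  · linarith [opNorm_sub_le_opNorm_sub_add_opNorm_sub ρ₁ ρ₂ σ]

theorem pls_frobenius_deterministic_bound_general {Φ B S : Matrix ι ι ℂ}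
    (hΦ : IsDensity Φ) (hB : IsDensity B) {τ δ : ℝ} {r : ℕ}
    (hτ : opNorm (B - Φ) ≤ 2 * τ) (hS : frobNorm (S - Φ) ≤ frobNorm (B - Φ))
    (hrank : AlmostRank r δ Φ ∨ AlmostRank r δ B) :
    frobNorm (S - Φ) ^ 2 ≤ 8 * r * τ * (δ + τ) := by
  obtain ⟨σ, hσ, hσr, hdist⟩ := exists_isDensity_opNorm_sub_add_le hrank.symm
  have hτ₀ : 0 ≤ 2 * τ := (opNorm_nonneg _).trans hτ
  have hdistτ : opNorm (B - σ) + opNorm (Φ - σ) ≤ 2 * δ + 2 * τ := by linarith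
  calc frobNorm (S - Φ) ^ 2 ≤ frobNorm (B - Φ) ^ 2 := pow_le_pow_left₀ (frobNorm_nonneg _) hS 2
    _ ≤ 2 * σ.rank * opNorm (B - Φ) * (opNorm (B - σ) + opNorm (Φ - σ)) :=
        frobNorm_sub_sq_le hB hΦ hσ
    _ ≤ 2 * r * (2 * τ) * (2 * δ + 2 * τ) := by
        have := opNorm_nonneg (B - Φ)
        have := opNorm_nonneg (B - σ)
        have := opNorm_nonneg (Φ - σ)
        gcongr
    _ = 8 * r * τ * (δ + τ) := by ring

end DensityMatrices

/-- deterministic Frobenius-norm content of Theorem 4, eq. (48): if `Φ, B` are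
density matrices, `‖B − Φ‖_∞ ≤ 2τ`, `‖S − Φ‖₂ ≤ ‖B − Φ‖₂`, and `Φ` or `B` is `δ`-almost rank
`r`, then `‖S − Φ‖₂² ≤ 2r(δ + 2τ)²`. -/
theorem pls_frobenius_deterministic_bound (n : ℕ)
    (Φ B S : Matrix (Fin n) (Fin n) ℂ)
    (hΦ : IsDensity Φ) (hB : IsDensity B)
    (τ δ : ℝ) (r : ℕ) (hτ : 0 ≤ τ) (hδ : 0 ≤ δ) (hr : 1 ≤ r)
    (h₁ : opNorm (B - Φ) ≤ 2 * τ)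
    (h₂ : frobNorm (S - Φ) ≤ frobNorm (B - Φ))
    (h₃ : AlmostRank r δ Φ ∨ AlmostRank r δ B) :
    frobNorm (S - Φ) ^ 2 ≤ 2 * r * (δ + 2 * τ) ^ 2 := by
  calc frobNorm (S - Φ) ^ 2 ≤ 8 * r * τ * (δ + τ) :=
        pls_frobenius_deterministic_bound_general hΦ hB h₁ h₂ h₃
    _ ≤ 2 * r * (δ + 2 * τ) ^ 2 := by linarith [show 0 ≤ 2 * r * δ ^ 2 by positivity]
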